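/- Let X be a metric space with a Borel probability measure μ, and let Δ : X → ℝ be measurable. Write Φ_Δ(z) = μ({x : Δ(x) ≥ z}), A(z) = {x ∈ X : Δ(x) ≥ z}, A'(z, ε) = {x ∈ A(z) : dist(x, X ∖ A(z)) ≥ ε}, A''(z, ε) = {x ∈ X : dist(x, A(z)) < ε}. Suppose z₀ ∈ ℝ, c > 0, δ > 0 are such that Φ_Δ(z) ≥ c · Φ_Δ(z − δ) for all z ≥ z₀, and suppose ε > 0 is such that for all x, y ∈ X with Δ(x) ≥ z₀ and dist(x, y) < ε one has |Δ(x) − Δ(y)| < δ. Then for every z ≥ z₀: c · μ(A(z)) ≤ μ(A'(z, ε)) ≤ μ(A''(z, ε)) ≤ (1/c) · μ(A(z)). -/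

import Mathlib

open Metric EMetric Set MeasureTheory

/-- `A(z) = {x : Δ(x) ≥ z}`, the superlevel set of `Δ`. -/
def superlevelSet {X : Type*} [MetricSpace X] (Δ : X → ℝ) (z : ℝ) : Set X :=
  {x | z ≤ Δ x}

/-- `A'(z, ε) = {x ∈ A(z) : dist(x, X ∖ A(z)) ≥ ε}`, the set of points of `A(z)` at distance
at least `ε` from its complement (the distance to the empty set being `+∞`). -/
def innerApprox {X : Type*} [MetricSpace X] (Δ : X → ℝ) (z ε : ℝ) : Set X :=
  {x | x ∈ superlevelSet Δ z ∧ ENNReal.ofReal ε ≤ infEdist x (superlevelSet Δ z)ᶜ}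

/-- `A''(z, ε) = {x : dist(x, A(z)) < ε}`, the open `ε`-neighborhood of `A(z)`. -/
def outerApprox {X : Type*} [MetricSpace X] (Δ : X → ℝ) (z ε : ℝ) : Set X :=
  {x | infEdist x (superlevelSet Δ z) < ENNReal.ofReal ε}

/-!
If `Δ` drops by less than `δ` over distances less than `ε`, then the `ε`-neighborhood of `A(w)`
lies in `A(w - δ)` for every `w ≥ z₀`. At `w = z` this says `A''(z, ε) ⊆ A(z - δ)`; at `w = z + δ`
it says `A(z + δ) ⊆ A'(z, ε)`, because eroding the target is adjoint to dilating the source. The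
decay condition at `z` and at `z + δ` compares the measures of these superlevel sets with that of
`A(z)`.
-/

section Approx

variable {X : Type*} [MetricSpace X] {Δ : X → ℝ} {z δ ε : ℝ}

theorem outerApprox_eq_thickening : outerApprox Δ z ε = thickening ε (superlevelSet Δ z) :=
  rfl

theorem innerApprox_eq_compl_thickening_compl (hε : 0 < ε) :
    innerApprox Δ z ε = (thickening ε (superlevelSet Δ z)ᶜ)ᶜ := by
  have hsub : (thickening ε (superlevelSet Δ z)ᶜ)ᶜ ⊆ superlevelSet Δ z :=
    compl_subset_comm.1 (self_subset_thickening hε _)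
  ext x
  exact ⟨fun hx ↦ not_lt.2 hx.2, fun hx ↦ ⟨hsub hx, not_lt.1 hx⟩⟩

theorem subset_innerApprox_of_thickening_subset (hε : 0 < ε) {s : Set X}
    (hs : thickening ε s ⊆ superlevelSet Δ z) : s ⊆ innerApprox Δ z ε :=
  calc s ⊆ (thickening ε (thickening ε s)ᶜ)ᶜ := subset_compl_thickening_compl_thickening_self ε s
    _ ⊆ (thickening ε (superlevelSet Δ z)ᶜ)ᶜ :=
      compl_subset_compl.2 (thickening_subset_of_subset ε (compl_subset_compl.2 hs))
    _ = innerApprox Δ z ε := (innerApprox_eq_compl_thickening_compl hε).symm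

theorem innerApprox_subset_outerApprox (hε : 0 < ε) : innerApprox Δ z ε ⊆ outerApprox Δ z ε :=
  fun _ hx ↦ self_subset_thickening hε _ hx.1

theorem thickening_superlevelSet_subset
    (hdrop : ∀ x y, z ≤ Δ x → dist x y < ε → Δ x - Δ y < δ) :
    thickening ε (superlevelSet Δ z) ⊆ superlevelSet Δ (z - δ) := by
  intro y hy
  obtain ⟨x, hx : z ≤ Δ x, hyx⟩ := mem_thickening_iff.1 hy
  have hxy : Δ x - Δ y < δ := hdrop x y hx (dist_comm y x ▸ hyx)
  change z - δ ≤ Δ y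
  linarith

theorem superlevelSet_add_subset_innerApprox (hε : 0 < ε)
    (hdrop : ∀ x y, z + δ ≤ Δ x → dist x y < ε → Δ x - Δ y < δ) :
    superlevelSet Δ (z + δ) ⊆ innerApprox Δ z ε := by
  have hsub : thickening ε (superlevelSet Δ (z + δ)) ⊆ superlevelSet Δ (z + δ - δ) :=
    thickening_superlevelSet_subset hdrop
  rw [add_sub_cancel_right] at hsub
  exact subset_innerApprox_of_thickening_subset hε hsub

theorem outerApprox_subset_superlevelSet_sub
    (hdrop : ∀ x y, z ≤ Δ x → dist x y < ε → Δ x - Δ y < δ) :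
    outerApprox Δ z ε ⊆ superlevelSet Δ (z - δ) :=
  outerApprox_eq_thickening.trans_subset (thickening_superlevelSet_subset hdrop)

end Approx

theorem measure_inner_outer_approx_general {X : Type*} [MetricSpace X] [MeasurableSpace X]
    (μ : Measure X) (Δ : X → ℝ) (z₀ c δ ε : ℝ) (hc : 0 < c) (hδ : 0 < δ) (hε : 0 < ε)
    (hDL : ∀ z : ℝ, z₀ ≤ z →
      ENNReal.ofReal c * μ (superlevelSet Δ (z - δ)) ≤ μ (superlevelSet Δ z))
    (hdrop : ∀ x y : X, z₀ ≤ Δ x → dist x y < ε → Δ x - Δ y < δ) :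
    ∀ z : ℝ, z₀ ≤ z →
      ENNReal.ofReal c * μ (superlevelSet Δ z) ≤ μ (innerApprox Δ z ε) ∧
      μ (innerApprox Δ z ε) ≤ μ (outerApprox Δ z ε) ∧
      μ (outerApprox Δ z ε) ≤ ENNReal.ofReal (1 / c) * μ (superlevelSet Δ z) := by
  intro z hz
  have hzδ : z₀ ≤ z + δ := by linarith
  have inner : superlevelSet Δ (z + δ) ⊆ innerApprox Δ z ε :=
    superlevelSet_add_subset_innerApprox hε fun x y hx ↦ hdrop x y (hzδ.trans hx)
  have outer : outerApprox Δ z ε ⊆ superlevelSet Δ (z - δ) :=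
    outerApprox_subset_superlevelSet_sub fun x y hx ↦ hdrop x y (hz.trans hx)
  refine ⟨?_, measure_mono (innerApprox_subset_outerApprox hε), ?_⟩
  · calc ENNReal.ofReal c * μ (superlevelSet Δ z)
        = ENNReal.ofReal c * μ (superlevelSet Δ (z + δ - δ)) := by rw [add_sub_cancel_right]
      _ ≤ μ (superlevelSet Δ (z + δ)) := hDL (z + δ) hzδ
      _ ≤ μ (innerApprox Δ z ε) := measure_mono inner
  · rw [one_div, ENNReal.ofReal_inv_of_pos hc,
      ← ENNReal.mul_le_iff_le_inv (ENNReal.ofReal_pos.2 hc).ne' ENNReal.ofReal_ne_top]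
    calc ENNReal.ofReal c * μ (outerApprox Δ z ε)
        ≤ ENNReal.ofReal c * μ (superlevelSet Δ (z - δ)) := by gcongr
      _ ≤ μ (superlevelSet Δ z) := hDL z hz

/-- If `Δ` satisfies the distance-like decay condition `Φ_Δ(z) ≥ c Φ_Δ(z − δ)` for `z ≥ z₀`
(where `Φ_Δ(z) = μ(A(z))`) and is uniformly continuous on `Δ⁻¹([z₀, ∞))`, then for every
`z ≥ z₀` one has `c μ(A(z)) ≤ μ(A'(z, ε)) ≤ μ(A''(z, ε)) ≤ (1/c) μ(A(z))`. -/
theorem measure_inner_outer_approx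
    {X : Type*} [MetricSpace X] [MeasurableSpace X] [BorelSpace X]
    (μ : Measure X) [IsProbabilityMeasure μ]
    (Δ : X → ℝ) (hΔ : Measurable Δ)
    (z₀ c δ ε : ℝ) (hc : 0 < c) (hδ : 0 < δ) (hε : 0 < ε)
    (hDL : ∀ z : ℝ, z₀ ≤ z →
      ENNReal.ofReal c * μ (superlevelSet Δ (z - δ)) ≤ μ (superlevelSet Δ z))
    (hunif : ∀ x y : X, z₀ ≤ Δ x → dist x y < ε → |Δ x - Δ y| < δ) :
    ∀ z : ℝ, z₀ ≤ z →
      ENNReal.ofReal c * μ (superlevelSet Δ z) ≤ μ (innerApprox Δ z ε) ∧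
      μ (innerApprox Δ z ε) ≤ μ (outerApprox Δ z ε) ∧
      μ (outerApprox Δ z ε) ≤ ENNReal.ofReal (1 / c) * μ (superlevelSet Δ z) :=
  measure_inner_outer_approx_general μ Δ z₀ c δ ε hc hδ hε hDL
    fun x y hx hxy ↦ (le_abs_self _).trans_lt (hunif x y hx hxy)
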